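/- arXiv:2401.03204 — 2 statements merged into one kernel-verified Lean document; each statement's English description precedes it below -/
import Mathlib

section
/- Part (3) of Lemma 5: 4·(η₃ + 2η₀ + 3η₁)·(η₁ + 2η₂ + 3η₃) ≡ 2(3−4y)·H + 5p + 9 (mod (4^p − 1)/3). -/
open Finset

/-- The cyclotomic class `D_i` of order 4 modulo `p` with respect to the
primitive root `θ`: `{θ^(i+4j) mod p : 0 ≤ j < (p-1)/4}`. -/
def cycD (p θ i : ℕ) : Finset ℕ :=
  (Finset.range ((p - 1) / 4)).image fun j => θ ^ (i + 4 * j) % p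

/-- `η_i = Σ_{t ∈ D_i} 4^t` as an integer. -/
def eta4 (p θ : ℕ) (i : ℕ) : ℤ := ∑ t ∈ cycD p θ i, (4 : ℤ) ^ t

/-- `H = η₀ + η₂ − η₁ − η₃`. -/
def Hval (p θ : ℕ) : ℤ := eta4 p θ 0 + eta4 p θ 2 - eta4 p θ 1 - eta4 p θ 3


lemma aux_zpow_gen (p : ℕ) [Fact p.Prime] (g : (ZMod p)ˣ)
    (hθ : IsPrimitiveRoot (g : ZMod p) (p - 1)) : ∀ x, x ∈ Subgroup.zpowers g := by
  have h1 : IsPrimitiveRoot g (p - 1) := IsPrimitiveRoot.coe_units_iff.mp hθ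
  have h2 : orderOf g = p - 1 := h1.eq_orderOf.symm
  have h3 : Subgroup.zpowers g = ⊤ := by
    apply Subgroup.eq_top_of_card_eq
    rw [Nat.card_zpowers, h2, Nat.card_eq_fintype_card, ZMod.card_units]
  intro x
  rw [h3]
  trivial

lemma aux_char (p θ : ℕ) [Fact p.Prime] (hp8 : p % 8 = 5)
    (hθ : IsPrimitiveRoot (θ : ZMod p) (p - 1)) :
    ∃ χ : MulChar (ZMod p) ℂ, χ (θ : ZMod p) = Complex.I := by
  have hu : IsUnit (θ : ZMod p) := hθ.isUnit (by omega)
  obtain ⟨g, hg⟩ := hu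
  have hI : (Units.mk0 Complex.I Complex.I_ne_zero) ∈
      rootsOfUnity (Fintype.card (ZMod p)ˣ) ℂ := by
    rw [mem_rootsOfUnity, ZMod.card_units]
    ext
    push_cast
    simp only [Units.val_mk0]
    obtain ⟨k, hk⟩ : ∃ k, p - 1 = 4 * k := ⟨(p - 1) / 4, by omega⟩
    rw [hk, pow_mul, Complex.I_pow_four, one_pow]
  rw [← hg] at hθ ⊢
  refine ⟨MulChar.ofRootOfUnity hI (aux_zpow_gen p g hθ), ?_⟩
  rw [MulChar.ofRootOfUnity_spec]
  rfl

lemma aux_I_pow (i k : ℕ) (hi : i < 4) (h : Complex.I ^ k = Complex.I ^ i) : k % 4 = i := by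
  have h0 : IsPrimitiveRoot Complex.I 4 := Complex.isPrimitiveRoot_I
  rw [pow_eq_pow_mod k Complex.I_pow_four] at h
  exact h0.pow_inj (Nat.mod_lt _ (by norm_num)) hi h

lemma aux_exists_pow (p θ : ℕ) [Fact p.Prime] (hp8 : p % 8 = 5)
    (hθ : IsPrimitiveRoot (θ : ZMod p) (p - 1)) (a : ZMod p) (ha : a ≠ 0) :
    ∃ k < p - 1, (θ : ZMod p) ^ k = a := by
  have : NeZero (p - 1) := ⟨by omega⟩
  exact hθ.eq_pow_of_pow_eq_one (ZMod.pow_card_sub_one_eq_one ha)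

lemma aux_vals (p θ : ℕ) [Fact p.Prime] (hp8 : p % 8 = 5)
    (hθ : IsPrimitiveRoot (θ : ZMod p) (p - 1))
    (χ : MulChar (ZMod p) ℂ) (hχ : χ (θ : ZMod p) = Complex.I) (a : ZMod p) (ha : a ≠ 0) :
    χ a = 1 ∨ χ a = Complex.I ∨ χ a = -1 ∨ χ a = -Complex.I := by
  obtain ⟨k, -, rfl⟩ := aux_exists_pow p θ hp8 hθ a ha
  rw [map_pow, hχ, pow_eq_pow_mod k Complex.I_pow_four]
  have : k % 4 < 4 := Nat.mod_lt _ (by norm_num)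
  interval_cases k % 4 <;> simp [pow_succ]

lemma aux_mem (p θ : ℕ) [Fact p.Prime] (hp8 : p % 8 = 5)
    (hθ : IsPrimitiveRoot (θ : ZMod p) (p - 1))
    (χ : MulChar (ZMod p) ℂ) (hχ : χ (θ : ZMod p) = Complex.I) (i : ℕ) (hi : i < 4)
    (a : ZMod p) : a.val ∈ cycD p θ i ↔ χ a = Complex.I ^ i := by
  unfold cycD
  rw [Finset.mem_image]
  constructor
  · rintro ⟨j, -, hj⟩
    have h : a = (θ : ZMod p) ^ (i + 4 * j) := by
      rw [← ZMod.natCast_zmod_val a, ← hj, ZMod.natCast_mod]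
      push_cast
      rfl
    rw [h, map_pow, hχ, pow_add, pow_mul, Complex.I_pow_four, one_pow, mul_one]
  · intro h
    have ha : a ≠ 0 := by
      rintro rfl
      rw [MulChar.map_zero] at h
      exact pow_ne_zero _ Complex.I_ne_zero h.symm
    obtain ⟨k, hk, rfl⟩ := aux_exists_pow p θ hp8 hθ a ha
    rw [map_pow, hχ] at h
    have h4 := aux_I_pow i k hi h
    refine ⟨k / 4, Finset.mem_range.mpr (by omega), ?_⟩
    have : i + 4 * (k / 4) = k := by omega
    rw [this, ← Nat.cast_pow, ZMod.val_natCast]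

lemma aux_cycD (p θ : ℕ) [Fact p.Prime] (hp8 : p % 8 = 5)
    (hθ : IsPrimitiveRoot (θ : ZMod p) (p - 1))
    (χ : MulChar (ZMod p) ℂ) (hχ : χ (θ : ZMod p) = Complex.I) (i : ℕ) (hi : i < 4) :
    cycD p θ i = (univ.filter (fun a : ZMod p => χ a = Complex.I ^ i)).image ZMod.val := by
  ext t
  rw [Finset.mem_image]
  constructor
  · intro ht
    have hlt : t < p := by
      unfold cycD at ht
      rw [Finset.mem_image] at ht
      obtain ⟨j, -, rfl⟩ := ht
      exact Nat.mod_lt _ (by omega)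
    refine ⟨(t : ZMod p), ?_, ZMod.val_cast_of_lt hlt⟩
    rw [Finset.mem_filter]
    refine ⟨mem_univ _, ?_⟩
    rw [← aux_mem p θ hp8 hθ χ hχ i hi, ZMod.val_cast_of_lt hlt]
    exact ht
  · rintro ⟨a, ha, rfl⟩
    rw [aux_mem p θ hp8 hθ χ hχ i hi]
    exact (Finset.mem_filter.mp ha).2

lemma aux_sum (p θ : ℕ) [Fact p.Prime] (hp8 : p % 8 = 5)
    (hθ : IsPrimitiveRoot (θ : ZMod p) (p - 1))
    (χ : MulChar (ZMod p) ℂ) (hχ : χ (θ : ZMod p) = Complex.I) (i : ℕ) (hi : i < 4)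
    (f : ℕ → ℂ) :
    ∑ t ∈ cycD p θ i, f t = ∑ a : ZMod p, if χ a = Complex.I ^ i then f a.val else 0 := by
  rw [aux_cycD p θ hp8 hθ χ hχ i hi, Finset.sum_image (fun a _ b _ h => ZMod.val_injective p h),
    Finset.sum_filter]

lemma aux_arith (p : ℕ) (hp : p.Prime) (x y a b : ℤ) (hx : x % 4 = 1)
    (hxy : (p : ℤ) = x ^ 2 + 4 * y ^ 2) (hab : a ^ 2 + b ^ 2 = p)
    (h : -2 * a - 4 * b = 2 * x - 8 * y) : b = 2 * y := by
  have hodd : a % 2 = 1 := by omega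
  have hb : b % 2 = 0 := by
    rcases Int.emod_two_eq_zero_or_one b with h0 | h0
    · exact h0
    · exfalso
      have e1 : a ^ 2 % 2 = 1 := by rw [pow_two, Int.mul_emod, hodd]; rfl
      have e2 : b ^ 2 % 2 = 1 := by rw [pow_two, Int.mul_emod, h0]; rfl
      have e3 : x ^ 2 % 2 = 1 := by
        have : x % 2 = 1 := by omega
        rw [pow_two, Int.mul_emod, this]; rfl
      omega
  obtain ⟨c, rfl⟩ : ∃ c, b = 2 * c := ⟨b / 2, by omega⟩
  have ha : a = -x + 4 * y - 4 * c := by omega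
  subst ha
  have hf : (c - y) * (5 * c - (3 * y - 2 * x)) = 0 := by
    have : (-x + 4 * y - 4 * c) ^ 2 + (2 * c) ^ 2 = x ^ 2 + 4 * y ^ 2 := by rw [hab, hxy]
    linarith
  rcases mul_eq_zero.mp hf with h1 | h1
  · omega
  · have h5 : (5 : ℤ) ∣ p := by
      have : x = 4 * y - 5 * (x - y + c) + 5 * x - 5 * x + 0 + (x - (4 * y - 5 * (x - y + c))) := by
        ring
      have hx' : x = 5 * (-c - x) + 3 * y + 4 * x - 0 := by omega
      have hy' : 2 * x = 3 * y - 5 * c := by omega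
      have : 4 * (p : ℤ) = 5 * (5 * y ^ 2 - 6 * y * c + 5 * c ^ 2) := by
        rw [hxy]
        have : (2 * x) ^ 2 = (3 * y - 5 * c) ^ 2 := by rw [hy']
        linarith
      omega
    have hp5 : p = 5 := by
      have : 5 ∣ p := by exact_mod_cast h5
      exact ((Nat.prime_dvd_prime_iff_eq Nat.prime_five hp).mp this).symm
    subst hp5
    push_cast at hxy
    have hy1 : y ≤ 1 := by nlinarith [sq_nonneg x]
    have hy2 : -1 ≤ y := by nlinarith [sq_nonneg x]
    have hx1 : x ≤ 2 := by nlinarith [sq_nonneg y]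
    have hx2 : -2 ≤ x := by nlinarith [sq_nonneg y]
    have : x = 1 := by omega
    subst this
    interval_cases y <;> omega

lemma aux_poly (p θ : ℕ) (hp : p.Prime) (y : ℤ) (ζ : ℂ) (hζ : IsPrimitiveRoot ζ p)
    (E : ℕ → ℂ) (hE : ∀ i, E i = ∑ t ∈ cycD p θ i, ζ ^ t)
    (h : 4 * (E 3 + 2 * E 0 + 3 * E 1) * (E 1 + 2 * E 2 + 3 * E 3)
      = 2 * (3 - 4 * (y : ℂ)) * (E 0 + E 2 - E 1 - E 3) + 5 * (p : ℂ) + 9) :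
    4 * (eta4 p θ 3 + 2 * eta4 p θ 0 + 3 * eta4 p θ 1)
        * (eta4 p θ 1 + 2 * eta4 p θ 2 + 3 * eta4 p θ 3)
      ≡ 2 * (3 - 4 * y) * Hval p θ + 5 * (p : ℤ) + 9 [ZMOD ((4 : ℤ) ^ p - 1) / 3] := by
  let e : ℕ → Polynomial ℤ := fun i => ∑ t ∈ cycD p θ i, Polynomial.X ^ t
  have he1 : ∀ i, Polynomial.aeval ζ (e i) = E i := by
    intro i; simp [e, hE]
  have he2 : ∀ i, Polynomial.eval 4 (e i) = eta4 p θ i := by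
    intro i; simp [e, eta4, Polynomial.eval_finsetSum]
  let P : Polynomial ℤ := 2 * (3 - 4 * Polynomial.C y) * (e 0 + e 2 - e 1 - e 3)
    + 5 * Polynomial.C (p : ℤ) + 9 - 4 * (e 3 + 2 * e 0 + 3 * e 1) * (e 1 + 2 * e 2 + 3 * e 3)
  have hP : Polynomial.aeval ζ P = 0 := by
    simp only [P, map_sub, map_add, map_mul, he1, Polynomial.aeval_C, map_ofNat]
    simp only [eq_intCast, Int.cast_natCast]
    rw [h]; ring
  have hd : Polynomial.cyclotomic p ℤ ∣ P := by
    rw [Polynomial.cyclotomic_eq_minpoly hζ hp.pos]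
    exact minpoly.isIntegrallyClosed_dvd (hζ.isIntegral hp.pos) hP
  have hd2 := Polynomial.eval_dvd (x := (4 : ℤ)) hd
  have := Fact.mk hp
  have hN : Polynomial.eval (4 : ℤ) (Polynomial.cyclotomic p ℤ) = ((4 : ℤ) ^ p - 1) / 3 := by
    rw [Polynomial.cyclotomic_prime, Polynomial.eval_geom_sum]
    have := geom_sum_mul (4 : ℤ) p
    omega
  rw [hN] at hd2
  rw [Int.modEq_iff_dvd]
  have hPe : Polynomial.eval 4 P = 2 * (3 - 4 * y) * Hval p θ + 5 * (p : ℤ) + 9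
      - 4 * (eta4 p θ 3 + 2 * eta4 p θ 0 + 3 * eta4 p θ 1)
        * (eta4 p θ 1 + 2 * eta4 p θ 2 + 3 * eta4 p θ 3) := by
    simp [P, he2, Hval]
  rw [← hPe]
  exact hd2

lemma aux_count (p θ : ℕ) [Fact p.Prime] (hp8 : p % 8 = 5)
    (hθ : IsPrimitiveRoot (θ : ZMod p) (p - 1))
    (χ : MulChar (ZMod p) ℂ) (hχ : χ (θ : ZMod p) = Complex.I) (hm : χ (-1) = -1) :
    16 * (((cycD p θ 0).filter (fun a => (a + 1) % p ∈ cycD p θ 1)).card : ℂ)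
      = ∑ x : ZMod p, ((1 : MulChar (ZMod p) ℂ) x - χ x + (χ ^ 2) x - χ⁻¹ x)
        * ((1 : MulChar (ZMod p) ℂ) (1 - x) - Complex.I * χ (1 - x) - (χ ^ 2) (1 - x)
          + Complex.I * χ⁻¹ (1 - x)) := by
  have hII := Complex.I_mul_I
  have h1 : (((cycD p θ 0).filter (fun a => (a + 1) % p ∈ cycD p θ 1)).card : ℂ)
      = ∑ a : ZMod p, if χ a = 1 then (if χ (a + 1) = Complex.I then 1 else 0) else 0 := by
    rw [Finset.card_filter, Nat.cast_sum, aux_sum p θ hp8 hθ χ hχ 0 (by norm_num), pow_zero]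
    refine Finset.sum_congr rfl fun a _ => ?_
    have : (a.val + 1) % p = (a + 1).val := by
      rw [← ZMod.val_natCast]; congr 1; simp
    have h2 := aux_mem p θ hp8 hθ χ hχ 1 (by norm_num) (a + 1)
    rw [pow_one] at h2
    simp only [this, h2]
    push_cast
    rfl
  rw [h1, ← Equiv.sum_comp (Equiv.neg (ZMod p)), Finset.mul_sum]
  refine Finset.sum_congr rfl fun x _ => ?_
  have hneg : χ (-x) = - χ x := by
    rw [← neg_one_mul, map_mul, hm, neg_one_mul]
  have hadd : -x + 1 = 1 - x := by ring
  have key : ∀ a : ZMod p,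
      4 * (if χ a = Complex.I then (1 : ℂ) else 0) = (1 : MulChar (ZMod p) ℂ) a
        - Complex.I * χ a - (χ ^ 2) a + Complex.I * χ⁻¹ a ∧
      4 * (if -χ a = 1 then (1 : ℂ) else 0) = (1 : MulChar (ZMod p) ℂ) a
        - χ a + (χ ^ 2) a - χ⁻¹ a := by
    intro a
    by_cases ha : a = 0
    · subst ha
      simp [MulChar.map_zero, Complex.I_ne_zero.symm]
    · rw [MulChar.one_apply (isUnit_iff_ne_zero.mpr ha), MulChar.pow_apply' _ two_ne_zero,
        MulChar.inv_apply_eq_inv']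
      have c1 : (1 : ℂ) ≠ Complex.I := by
        intro h; simpa using congrArg Complex.re h
      have c2 : (-1 : ℂ) ≠ Complex.I := by
        intro h; simpa using congrArg Complex.re h
      have c3 : -Complex.I ≠ Complex.I := by
        intro h; have := congrArg Complex.im h; norm_num at this
      have c4 : -Complex.I ≠ 1 := by
        intro h; simpa using congrArg Complex.re h
      have c5 : (-1 : ℂ) ≠ 1 := by norm_num
      rcases aux_vals p θ hp8 hθ χ hχ a ha with h | h | h | h <;> rw [h] <;>
        simp [c1, c2, c3, c4, c5, c1.symm, Complex.inv_I] <;> ring_nf <;> trivial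
  simp only [Equiv.neg_apply]
  rw [hneg, hadd, ← (key x).2, ← (key (1 - x)).1]
  split_ifs <;> norm_num

lemma aux_gauss (p θ : ℕ) [Fact p.Prime] (hp8 : p % 8 = 5)
    (hθ : IsPrimitiveRoot (θ : ZMod p) (p - 1))
    (χ : MulChar (ZMod p) ℂ) (hχ : χ (θ : ZMod p) = Complex.I)
    (ζ : ℂ) (ψ : AddChar (ZMod p) ℂ) (hψ : ∀ a, ψ a = ζ ^ a.val)
    (E : ℕ → ℂ) (hE : ∀ i, E i = ∑ t ∈ cycD p θ i, ζ ^ t) :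
    gaussSum 1 ψ = E 0 + E 1 + E 2 + E 3 ∧
    gaussSum χ ψ = E 0 + Complex.I * E 1 - E 2 - Complex.I * E 3 ∧
    gaussSum (χ ^ 2) ψ = E 0 - E 1 + E 2 - E 3 ∧
    gaussSum χ⁻¹ ψ = E 0 - Complex.I * E 1 - E 2 + Complex.I * E 3 := by
  have c1 : (1 : ℂ) ≠ Complex.I := by
    intro h; simpa using congrArg Complex.re h
  have c2 : (-1 : ℂ) ≠ Complex.I := by
    intro h; simpa using congrArg Complex.re h
  have c3 : -Complex.I ≠ Complex.I := by
    intro h; have := congrArg Complex.im h; norm_num at this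
  have c4 : -Complex.I ≠ 1 := by
    intro h; simpa using congrArg Complex.re h
  have c5 : (-1 : ℂ) ≠ 1 := by norm_num
  have hI3 : Complex.I ^ 3 = -Complex.I := by simp [pow_succ]
  have e0 := aux_sum p θ hp8 hθ χ hχ 0 (by norm_num) (fun t => ζ ^ t)
  have e1 := aux_sum p θ hp8 hθ χ hχ 1 (by norm_num) (fun t => ζ ^ t)
  have e2 := aux_sum p θ hp8 hθ χ hχ 2 (by norm_num) (fun t => ζ ^ t)
  have e3 := aux_sum p θ hp8 hθ χ hχ 3 (by norm_num) (fun t => ζ ^ t)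
  simp only [← hE, ← hψ, pow_zero, pow_one, Complex.I_sq, hI3] at e0 e1 e2 e3
  rw [e0, e1, e2, e3]
  unfold gaussSum
  simp only [Finset.mul_sum, ← Finset.sum_add_distrib, ← Finset.sum_sub_distrib]
  refine ⟨?_, ?_, ?_, ?_⟩ <;> refine Finset.sum_congr rfl fun a _ => ?_ <;>
  · by_cases ha : a = 0
    · subst ha
      simp [MulChar.map_zero, Complex.I_ne_zero.symm]
    · have hone := MulChar.one_apply (R' := ℂ) (isUnit_iff_ne_zero.mpr ha)
      rcases aux_vals p θ hp8 hθ χ hχ a ha with h | h | h | h <;>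
        simp [h, hone, c1, c2, c3, c4, c5, c1.symm, c2.symm, c3.symm, c4.symm, c5.symm,
          MulChar.pow_apply', MulChar.inv_apply_eq_inv', Complex.inv_I]


lemma aux_neg_one (p θ : ℕ) [Fact p.Prime] (hp8 : p % 8 = 5)
    (hθ : IsPrimitiveRoot (θ : ZMod p) (p - 1))
    (χ : MulChar (ZMod p) ℂ) (hχ : χ (θ : ZMod p) = Complex.I) : χ (-1) = -1 := by
  have h1 : IsPrimitiveRoot ((θ : ZMod p) ^ ((p - 1) / 2)) 2 :=
    hθ.pow (by omega) (by omega)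
  rw [← h1.eq_neg_one_of_two_right, map_pow, hχ,
    pow_eq_pow_mod ((p - 1) / 2) Complex.I_pow_four]
  have : (p - 1) / 2 % 4 = 2 := by omega
  rw [this, Complex.I_sq]

lemma aux_star (p θ : ℕ) [Fact p.Prime] (hp8 : p % 8 = 5)
    (hθ : IsPrimitiveRoot (θ : ZMod p) (p - 1))
    (χ : MulChar (ZMod p) ℂ) (hχ : χ (θ : ZMod p) = Complex.I) :
    ∃ a b : ℤ, jacobiSum χ χ = a + b * Complex.I ∧ jacobiSum χ⁻¹ χ⁻¹ = a - b * Complex.I := by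
  have h1 : ∀ x : ZMod p, ∃ z : GaussianInt, χ x = GaussianInt.toComplex z ∧
      χ⁻¹ x = GaussianInt.toComplex (star z) := by
    intro x
    by_cases hx : x = 0
    · subst hx
      exact ⟨0, by simp [MulChar.map_zero]⟩
    · rcases aux_vals p θ hp8 hθ χ hχ x hx with h | h | h | h
      · exact ⟨1, by simp [h, MulChar.inv_apply_eq_inv']⟩
      · exact ⟨⟨0, 1⟩, by simp [h, MulChar.inv_apply_eq_inv', GaussianInt.toComplex_def]⟩
      · exact ⟨-1, by simp [h, MulChar.inv_apply_eq_inv']⟩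
      · exact ⟨⟨0, -1⟩, by simp [h, MulChar.inv_apply_eq_inv', GaussianInt.toComplex_def]⟩
  choose f hf1 hf2 using h1
  refine ⟨(∑ x, f x * f (1 - x)).re, (∑ x, f x * f (1 - x)).im, ?_, ?_⟩
  · rw [← GaussianInt.toComplex_def, map_sum]
    unfold jacobiSum
    simp [hf1]
  · have : jacobiSum χ⁻¹ χ⁻¹ = GaussianInt.toComplex (star (∑ x, f x * f (1 - x))) := by
      rw [star_sum, map_sum]
      unfold jacobiSum
      simp only [hf2, star_mul, map_mul]
      exact Finset.sum_congr rfl fun _ _ => mul_comm _ _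
    rw [this, GaussianInt.toComplex_def]
    generalize (∑ x, f x * f (1 - x)) = S
    rw [Zsqrtd.re_star, Zsqrtd.im_star]
    push_cast
    ring

theorem lemma5_part3
    (p : ℕ) (hp : p.Prime) (hp8 : p % 8 = 5)
    (x y : ℤ) (hx : x % 4 = 1) (hxy : (p : ℤ) = x ^ 2 + 4 * y ^ 2)
    (θ : ℕ) (hθ : IsPrimitiveRoot (θ : ZMod p) (p - 1))
    (hy : 16 * (((cycD p θ 0).filter (fun a => (a + 1) % p ∈ cycD p θ 1)).card : ℤ)
        = (p : ℤ) + 1 + 2 * x - 8 * y)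
    :
    4 * (eta4 p θ 3 + 2 * eta4 p θ 0 + 3 * eta4 p θ 1) * (eta4 p θ 1 + 2 * eta4 p θ 2 + 3 * eta4 p θ 3)
      ≡ 2 * (3 - 4 * y) * Hval p θ + 5 * (p : ℤ) + 9 [ZMOD ((4 : ℤ) ^ p - 1) / 3] := by
  have := Fact.mk hp
  obtain ⟨χ, hχ⟩ := aux_char p θ hp8 hθ
  have hm := aux_neg_one p θ hp8 hθ χ hχ
  have hII := Complex.I_mul_I
  have hu : IsUnit (θ : ZMod p) := hθ.isUnit (by omega)
  have hn1 : χ ≠ 1 := by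
    intro h
    rw [h, MulChar.one_apply hu] at hχ
    simpa using congrArg Complex.re hχ
  have hn2 : χ ^ 2 ≠ 1 := by
    intro h
    have h2 : (χ ^ 2) (θ : ZMod p) = -1 := by
      rw [MulChar.pow_apply' _ two_ne_zero, hχ, Complex.I_sq]
    rw [h, MulChar.one_apply hu] at h2
    norm_num at h2
  have h4 : χ ^ 4 = 1 := by
    ext a
    rw [MulChar.pow_apply' _ four_ne_zero, MulChar.one_apply a.isUnit]
    have he : Even 4 := by decide
    rcases aux_vals p θ hp8 hθ χ hχ a a.ne_zero with h | h | h | h <;> rw [h]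
    · exact one_pow 4
    · exact Complex.I_pow_four
    · rw [he.neg_pow, one_pow]
    · rw [he.neg_pow, Complex.I_pow_four]
  have hn3 : χ⁻¹ ≠ 1 := inv_ne_one.mpr hn1
  have hinv2 : (χ ^ 2)⁻¹ = χ ^ 2 := by
    rw [inv_eq_iff_mul_eq_one, ← pow_add]; exact h4
  have h12 : χ * χ ^ 2 = χ⁻¹ := by
    rw [eq_inv_iff_mul_eq_one, ← h4]; group
  have h32 : χ⁻¹ * χ ^ 2 = χ := by group
  have h33 : χ⁻¹ * χ⁻¹ = χ ^ 2 := by rw [← hinv2]; group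
  have h11 : χ * χ = χ ^ 2 := (sq χ).symm
  let ζ : ℂ := Complex.exp (2 * Real.pi * Complex.I / p)
  have hζ : IsPrimitiveRoot ζ p := Complex.isPrimitiveRoot_exp p hp.ne_zero
  let ψ : AddChar (ZMod p) ℂ := AddChar.zmodChar p hζ.pow_eq_one
  have hψ : ψ.IsPrimitive := AddChar.zmodChar_primitive_of_primitive_root p hζ
  have hψ1 : ψ ≠ 1 := by
    have := hψ (one_ne_zero (α := ZMod p))
    rwa [AddChar.mulShift_one] at this
  let E : ℕ → ℂ := fun i => ∑ t ∈ cycD p θ i, ζ ^ t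
  obtain ⟨g0, g1, g2, g3⟩ := aux_gauss p θ hp8 hθ χ hχ ζ ψ (fun a => rfl) E (fun i => rfl)
  rw [gaussSum_one_left hψ1] at g0
  obtain ⟨a, b, hJ, hJ'⟩ := aux_star p θ hp8 hθ χ hχ
  have hp0 : (p : ℂ) ≠ 0 := by exact_mod_cast hp.ne_zero
  have hcard : (Fintype.card (ZMod p) : ℂ) = p := by rw [ZMod.card]
  have hm2 : (χ ^ 2) (-1) = 1 := by
    rw [MulChar.pow_apply' _ two_ne_zero, hm]; norm_num
  -- Gauss sum relations
  have hneg : ∀ φ : MulChar (ZMod p) ℂ, gaussSum φ⁻¹ ψ⁻¹ = φ⁻¹ (-1) * gaussSum φ⁻¹ ψ := by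
    intro φ
    have h := gaussSum_mulShift φ⁻¹ ψ (-1)
    have e : ψ.mulShift ((-1 : (ZMod p)ˣ) : ZMod p) = ψ⁻¹ := by
      ext x; simp [AddChar.mulShift_apply, AddChar.inv_apply]
    rw [e] at h
    have hs : φ⁻¹ (-1) * φ⁻¹ (-1) = 1 := by rw [← map_mul]; simp
    calc gaussSum φ⁻¹ ψ⁻¹ = (φ⁻¹ (-1) * φ⁻¹ (-1)) * gaussSum φ⁻¹ ψ⁻¹ := by rw [hs, one_mul]
      _ = _ := by
        rw [mul_assoc]
        congr 1
  have r13 : gaussSum χ ψ * gaussSum χ⁻¹ ψ = -p := by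
    have := gaussSum_mul_gaussSum_eq_card hn1 hψ
    rw [hneg, hcard, MulChar.inv_apply_eq_inv', hm] at this
    rw [← this]; norm_num
  have r22 : gaussSum (χ ^ 2) ψ * gaussSum (χ ^ 2) ψ = p := by
    have := gaussSum_mul_gaussSum_eq_card hn2 hψ
    rw [hneg, hcard, hinv2, hm2, one_mul] at this
    exact this
  have r11 := jacobiSum_mul_nontrivial (χ := χ) (φ := χ) (by rw [h11]; exact hn2) ψ
  have r33 := jacobiSum_mul_nontrivial (χ := χ⁻¹) (φ := χ⁻¹) (by rw [h33]; exact hn2) ψ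
  have r12 := jacobiSum_mul_nontrivial (χ := χ) (φ := χ ^ 2) (by rw [h12]; exact hn3) ψ
  have r32 := jacobiSum_mul_nontrivial (χ := χ⁻¹) (φ := χ ^ 2) (by rw [h32]; exact hn1) ψ
  rw [h11] at r11
  rw [h33] at r33
  rw [h12] at r12
  rw [h32] at r32
  have j12 : jacobiSum χ (χ ^ 2) = - jacobiSum χ χ := by
    apply mul_left_cancel₀ hp0
    linear_combination jacobiSum χ (χ ^ 2) * r13 - gaussSum χ ψ * r12
      + gaussSum (χ ^ 2) ψ * r11 - jacobiSum χ χ * r22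
  have j32 : jacobiSum χ⁻¹ (χ ^ 2) = - jacobiSum χ⁻¹ χ⁻¹ := by
    apply mul_left_cancel₀ hp0
    linear_combination jacobiSum χ⁻¹ (χ ^ 2) * r13 - gaussSum χ⁻¹ ψ * r32
      + gaussSum (χ ^ 2) ψ * r33 - jacobiSum χ⁻¹ χ⁻¹ * r22
  have hnorm : (a : ℂ) ^ 2 + (b : ℂ) ^ 2 = p := by
    have h := jacobiSum_mul_jacobiSum_inv (F := ZMod p) (F' := ℂ) (χ := χ) (φ := χ) (by
      rw [ringChar.eq_zero, ZMod.ringChar_zmod_n]; exact hp.ne_zero.symm) hn1 hn1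
      (by rw [h11]; exact hn2)
    rw [hcard, hJ, hJ'] at h
    rw [← h]
    linear_combination (b : ℂ) ^ 2 * hII
  have hcount := aux_count p θ hp8 hθ χ hχ hm
  have hexp : ∑ x : ZMod p, ((1 : MulChar (ZMod p) ℂ) x - χ x + (χ ^ 2) x - χ⁻¹ x)
        * ((1 : MulChar (ZMod p) ℂ) (1 - x) - Complex.I * χ (1 - x) - (χ ^ 2) (1 - x)
          + Complex.I * χ⁻¹ (1 - x))
      = jacobiSum (1 : MulChar (ZMod p) ℂ) 1 - Complex.I * jacobiSum 1 χ - jacobiSum 1 (χ ^ 2)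
          + Complex.I * jacobiSum 1 χ⁻¹
        - (jacobiSum χ 1 - Complex.I * jacobiSum χ χ - jacobiSum χ (χ ^ 2)
          + Complex.I * jacobiSum χ χ⁻¹)
        + (jacobiSum (χ ^ 2) 1 - Complex.I * jacobiSum (χ ^ 2) χ - jacobiSum (χ ^ 2) (χ ^ 2)
          + Complex.I * jacobiSum (χ ^ 2) χ⁻¹)
        - (jacobiSum χ⁻¹ 1 - Complex.I * jacobiSum χ⁻¹ χ - jacobiSum χ⁻¹ (χ ^ 2)
          + Complex.I * jacobiSum χ⁻¹ χ⁻¹) := by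
    unfold jacobiSum
    simp only [Finset.mul_sum, ← Finset.sum_add_distrib, ← Finset.sum_sub_distrib]
    refine Finset.sum_congr rfl fun x _ => ?_
    ring
  have j22 : jacobiSum (χ ^ 2) (χ ^ 2) = -1 := by
    have := jacobiSum_nontrivial_inv hn2
    rwa [hinv2, hm2] at this
  have j13 : jacobiSum χ χ⁻¹ = 1 := by
    rw [jacobiSum_nontrivial_inv hn1, hm, neg_neg]
  rw [hexp, jacobiSum_comm χ 1, jacobiSum_comm (χ ^ 2) 1, jacobiSum_comm χ⁻¹ 1,
    jacobiSum_comm (χ ^ 2) χ, jacobiSum_comm (χ ^ 2) χ⁻¹, jacobiSum_comm χ⁻¹ χ,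
    jacobiSum_one_one, jacobiSum_one_nontrivial hn1, jacobiSum_one_nontrivial hn2,
    jacobiSum_one_nontrivial hn3, j22, j13, j12, j32, hJ, hJ', hcard] at hcount
  have hyC : 16 * (((cycD p θ 0).filter (fun a => (a + 1) % p ∈ cycD p θ 1)).card : ℂ)
        = (p : ℂ) + 1 + 2 * x - 8 * y := by exact_mod_cast congrArg (Int.cast : ℤ → ℂ) hy
  have hlinC : -2 * (a : ℂ) - 4 * b = 2 * x - 8 * y := by
    linear_combination hyC - hcount - 4 * (b : ℂ) * hII
  have hb : b = 2 * y := aux_arith p hp x y a b hx hxy (by exact_mod_cast hnorm)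
    (by exact_mod_cast hlinC)
  subst hb
  refine aux_poly p θ hp y ζ hζ E (fun i => rfl) ?_
  rw [g1, hJ, g2] at r11
  rw [g3, hJ', g2] at r33
  rw [g1, g3] at r13
  rw [g2] at r22
  push_cast at r11 r33
  have rAB : (E 0 - E 2) * (E 1 - E 3) = y * (E 0 - E 1 + E 2 - E 3) := by
    have h4I : (4 * Complex.I) ≠ 0 := by simp
    apply mul_left_cancel₀ h4I
    linear_combination r33 - r11
  have rsq : (E 0 - E 2) ^ 2 + (E 1 - E 3) ^ 2 = -p := by
    linear_combination r13 + (E 1 - E 3) ^ 2 * hII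
  linear_combination (-8) * rAB - 4 * rsq + r22
    - 3 * (E 0 + E 2 + 5 * (E 1 + E 3) - 3) * g0
end

section
/- Part (4) of Lemma 5: 4·(η₂ + 2η₃ + 3η₀)·(η₀ + 2η₁ + 3η₂) ≡ −2(3−4y)·H + 5p + 9 (mod (4^p − 1)/3). -/
open Finset

open Complex in
lemma exists_chi (p : ℕ) [Fact p.Prime] (hp8 : p % 8 = 5)
    (θ : ℕ) (hθ : IsPrimitiveRoot (θ : ZMod p) (p - 1)) :
    ∃ χ : MulChar (ZMod p) ℂ, χ (θ : ZMod p) = I := by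
  classical
  have hp1 : p - 1 ≠ 0 := by omega
  have hu : IsUnit (θ : ZMod p) := hθ.isUnit hp1
  obtain ⟨g, hg⟩ := hu
  have hgp : IsPrimitiveRoot g (p - 1) := by
    rw [← hg] at hθ
    exact IsPrimitiveRoot.coe_units_iff.mp hθ
  have hgen : ∀ z, z ∈ Subgroup.zpowers g := by
    intro z
    have : orderOf g = Nat.card (ZMod p)ˣ := by
      rw [← hgp.eq_orderOf, Nat.card_eq_fintype_card, ZMod.card_units_eq_totient, Nat.totient_prime Fact.out]
    have h2 : Subgroup.zpowers g = ⊤ := by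
      apply Subgroup.eq_top_of_card_eq
      rw [Nat.card_zpowers, this]
    rw [h2]; trivial
  let μ : ℂˣ := Units.mk0 I I_ne_zero
  have hμ : μ ∈ rootsOfUnity (Fintype.card (ZMod p)ˣ) ℂ := by
    rw [_root_.mem_rootsOfUnity, ZMod.card_units_eq_totient, Nat.totient_prime Fact.out]
    ext
    simp only [μ, Units.val_pow_eq_pow_val, Units.val_mk0, Units.val_one]
    have : p - 1 = 4 * ((p-1)/4) := by omega
    rw [this, pow_mul, I_pow_four, one_pow]
  refine ⟨MulChar.ofRootOfUnity hμ hgen, ?_⟩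
  rw [← hg, MulChar.ofRootOfUnity_spec]
  rfl

open Complex in
lemma I_pow_inj4 (m n : ℕ) (h : I ^ m = I ^ n) : m % 4 = n % 4 := by
  have e : ∀ k : ℕ, I ^ k = I ^ (k % 4) := by
    intro k
    conv_lhs => rw [← Nat.div_add_mod k 4, pow_add, pow_mul, I_pow_four, one_pow, one_mul]
  rw [e m, e n] at h
  exact isPrimitiveRoot_I.pow_inj (Nat.mod_lt _ (by norm_num)) (Nat.mod_lt _ (by norm_num)) h

open Complex in
lemma mem_cyc (p : ℕ) [Fact p.Prime] (hp8 : p % 8 = 5)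
    (θ : ℕ) (hθ : IsPrimitiveRoot (θ : ZMod p) (p - 1))
    (χ : MulChar (ZMod p) ℂ) (hχ : χ (θ : ZMod p) = I) (i : ℕ) (hi : i < 4) (a : ZMod p) :
    a.val ∈ cycD p θ i ↔ χ a = I ^ i := by
  unfold cycD
  simp only [Finset.mem_image, Finset.mem_range]
  constructor
  · rintro ⟨j, hj, h⟩
    have : a = (θ : ZMod p) ^ (i + 4 * j) := by
      rw [← ZMod.natCast_zmod_val a, ← h, ZMod.natCast_mod]
      push_cast; rfl
    rw [this, map_pow, hχ, pow_add, pow_mul, I_pow_four, one_pow, mul_one]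
  · intro h
    have ha : a ≠ 0 := by
      rintro rfl
      rw [MulChar.map_zero] at h
      exact pow_ne_zero _ I_ne_zero h.symm
    have : NeZero (p - 1) := ⟨by omega⟩
    obtain ⟨n, hn, rfl⟩ := hθ.eq_pow_of_pow_eq_one (ZMod.pow_card_sub_one_eq_one ha)
    rw [map_pow, hχ] at h
    have := I_pow_inj4 _ _ h
    refine ⟨n / 4, by omega, ?_⟩
    have h2 : i + 4 * (n / 4) = n := by omega
    rw [h2, ← Nat.cast_pow, ZMod.val_natCast]

lemma cyc_lt (p : ℕ) (hp : p.Prime) (θ i t : ℕ) (h : t ∈ cycD p θ i) : t < p := by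
  unfold cycD at h
  simp only [Finset.mem_image, Finset.mem_range] at h
  obtain ⟨j, _, rfl⟩ := h
  exact Nat.mod_lt _ hp.pos

open Complex in
lemma sum_cyc (p : ℕ) [Fact p.Prime] (hp8 : p % 8 = 5)
    (θ : ℕ) (hθ : IsPrimitiveRoot (θ : ZMod p) (p - 1))
    (χ : MulChar (ZMod p) ℂ) (hχ : χ (θ : ZMod p) = I) (i : ℕ) (hi : i < 4) (F : ℕ → ℂ) :
    ∑ t ∈ cycD p θ i, F t = ∑ a : ZMod p, if χ a = I ^ i then F a.val else 0 := by
  classical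
  rw [← Finset.sum_filter]
  symm
  apply Finset.sum_bij (fun a _ => ZMod.val a)
  · intro a ha
    exact (mem_cyc p hp8 θ hθ χ hχ i hi a).mpr (by simpa using ha)
  · intro a _ b _ h
    exact ZMod.val_injective p h
  · intro t ht
    have hlt := cyc_lt p Fact.out θ i t ht
    have hv : (t : ZMod p).val = t := ZMod.val_cast_of_lt hlt
    refine ⟨(t : ZMod p), ?_, hv⟩
    simp only [Finset.mem_filter, Finset.mem_univ, true_and]
    rw [← mem_cyc p hp8 θ hθ χ hχ i hi, hv]
    exact ht
  · intros; rfl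

open Complex in
lemma chi_vals (p : ℕ) [Fact p.Prime] (hp8 : p % 8 = 5)
    (θ : ℕ) (hθ : IsPrimitiveRoot (θ : ZMod p) (p - 1))
    (χ : MulChar (ZMod p) ℂ) (hχ : χ (θ : ZMod p) = I) (a : ZMod p) (ha : a ≠ 0) :
    χ a = 1 ∨ χ a = I ∨ χ a = -1 ∨ χ a = -I := by
  have : NeZero (p - 1) := ⟨by omega⟩
  obtain ⟨n, hn, rfl⟩ := hθ.eq_pow_of_pow_eq_one (ZMod.pow_card_sub_one_eq_one ha)
  rw [map_pow, hχ, ← Nat.div_add_mod n 4, pow_add, pow_mul, I_pow_four, one_pow, one_mul]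
  have : n % 4 < 4 := Nat.mod_lt _ (by norm_num)
  interval_cases n % 4 <;> simp [I_pow_three]

open Complex in
lemma chi_neg_one (p : ℕ) [Fact p.Prime] (hp8 : p % 8 = 5)
    (θ : ℕ) (hθ : IsPrimitiveRoot (θ : ZMod p) (p - 1))
    (χ : MulChar (ZMod p) ℂ) (hχ : χ (θ : ZMod p) = I) : χ (-1) = -1 := by
  have hh : (θ : ZMod p) ^ ((p - 1) / 2) = -1 := by
    apply IsPrimitiveRoot.eq_neg_one_of_two_right
    exact hθ.pow (by omega) (by omega)
  rw [← hh, map_pow, hχ]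
  have : (p - 1) / 2 = 4 * ((p - 1) / 8) + 2 := by omega
  rw [this, pow_add, pow_mul, I_pow_four, one_pow, one_mul, I_sq]

lemma rep_unique (p x y s t : ℤ) (hp : Prime p) (hp0 : 0 < p) (h1 : p = x ^ 2 + 4 * y ^ 2)
    (h2 : p = s ^ 2 + 4 * t ^ 2) (hs : s % 2 = 1) (h : x - 4 * y = s - 4 * t) : y = t := by
  have key : x ^ 2 = s ^ 2 := by
    have hd : p ∣ (x * t - s * y) * (x * t + s * y) := ⟨t ^ 2 - y ^ 2, by
      linear_combination (y^2) * h2 - t^2 * h1⟩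
    have main : ∀ s' : ℤ, p = s' ^ 2 + 4 * t ^ 2 → p ∣ x * t - s' * y → x ^ 2 = s' ^ 2 := by
      intro s' h2' ⟨k, hk⟩
      have e : (x * s' + 4 * y * t) ^ 2 + 4 * (x * t - s' * y) ^ 2 = p ^ 2 := by
        linear_combination (-p) * h1 - (x^2+4*y^2) * h2'
      have hk0 : k = 0 := by
        rw [hk] at e
        by_contra hne
        have : 1 ≤ k ^ 2 := by
          have := sq_pos_of_ne_zero hne
          omega
        nlinarith [sq_nonneg (x * s' + 4 * y * t), sq_pos_of_pos hp0, mul_le_mul_of_nonneg_left this (sq_nonneg p)]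
      rw [hk0, mul_zero] at hk
      have : p * x ^ 2 = p * s' ^ 2 := by
        linear_combination x^2 * h2' - s'^2 * h1 + 4 * (x * t + s' * y) * hk
      exact mul_left_cancel₀ hp0.ne' this
    rcases hp.dvd_or_dvd hd with h' | h'
    · exact main s h2 h'
    · have := main (-s) (by linarith) (by simpa [sub_neg_eq_add] using h')
      linarith
  rcases sq_eq_sq_iff_eq_or_eq_neg.mp key with h' | h' <;> omega
open Complex in
lemma zI_form (z : ℂ) (hz : z ∈ Algebra.adjoin ℤ {I}) : ∃ m n : ℤ, z = m + n * I := by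
  induction hz using Algebra.adjoin_induction with
  | mem x hx => exact ⟨0, 1, by rw [Set.mem_singleton_iff.mp hx]; simp⟩
  | algebraMap r => exact ⟨r, 0, by simp⟩
  | add a b _ _ ha hb =>
    obtain ⟨m, n, rfl⟩ := ha
    obtain ⟨m', n', rfl⟩ := hb
    exact ⟨m + m', n + n', by push_cast; ring⟩
  | mul a b _ _ ha hb =>
    obtain ⟨m, n, rfl⟩ := ha
    obtain ⟨m', n', rfl⟩ := hb
    exact ⟨m * m' - n * n', m * n' + n * m', by push_cast; linear_combination (n * n' : ℂ) * I_sq⟩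

open Complex in
lemma chi_facts (p : ℕ) [Fact p.Prime] (hp8 : p % 8 = 5)
    (θ : ℕ) (hθ : IsPrimitiveRoot (θ : ZMod p) (p - 1))
    (χ : MulChar (ZMod p) ℂ) (hχ : χ (θ : ZMod p) = I) :
    χ ^ 4 = 1 ∧ χ ≠ 1 ∧ χ⁻¹ ≠ 1 ∧ χ * χ ≠ 1 := by
  have hu : IsUnit (θ : ZMod p) := hθ.isUnit (by omega)
  have h1 : χ ≠ 1 := by
    rintro rfl
    rw [MulChar.one_apply hu] at hχ
    exact absurd (congrArg Complex.re hχ) (by simp)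
  refine ⟨?_, h1, by simpa using h1, ?_⟩
  · ext a
    have ha : (a : ZMod p) ≠ 0 := a.ne_zero
    rw [MulChar.pow_apply_coe, MulChar.one_apply_coe]
    rcases chi_vals p hp8 θ hθ χ hχ _ ha with h | h | h | h <;> rw [h] <;> 
      simp [I_pow_four, Even.neg_pow (show Even 4 by decide)]
  · intro h
    have := congrArg (fun f : MulChar (ZMod p) ℂ => f (θ : ZMod p)) h
    simp only [MulChar.mul_apply, hχ, MulChar.one_apply hu, I_mul_I] at this
    norm_num at this

open Complex in
lemma J_form (p : ℕ) [Fact p.Prime] (hp8 : p % 8 = 5)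
    (θ : ℕ) (hθ : IsPrimitiveRoot (θ : ZMod p) (p - 1))
    (χ : MulChar (ZMod p) ℂ) (hχ : χ (θ : ZMod p) = I) :
    ∃ s t : ℤ, s % 2 = 1 ∧ (p : ℤ) = s ^ 2 + 4 * t ^ 2 ∧ jacobiSum χ χ = -s + 2 * t * I ∧
      jacobiSum χ⁻¹ χ⁻¹ = -s - 2 * t * I := by
  obtain ⟨h4, h1, h1', h2⟩ := chi_facts p hp8 θ hθ χ hχ
  obtain ⟨z, hz, hJ⟩ := exists_jacobiSum_eq_neg_one_add (n := 4) (by norm_num) h4 h4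
    (by rw [ZMod.card]; omega) isPrimitiveRoot_I
  obtain ⟨m, n, rfl⟩ := zI_form z hz
  have e1 : jacobiSum χ χ = -(1 - 2 * n : ℤ) + 2 * (-m : ℤ) * I := by
    rw [hJ]; push_cast
    linear_combination (m + n * I - 2 * n : ℂ) * I_sq
  have e2 : jacobiSum χ⁻¹ χ⁻¹ = -(1 - 2 * n : ℤ) - 2 * (-m : ℤ) * I := by
    have : jacobiSum χ⁻¹ χ⁻¹ = (starRingEnd ℂ) (jacobiSum χ χ) := by
      simp only [jacobiSum, map_sum, map_mul]
      refine Finset.sum_congr rfl fun a _ => ?_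
      rw [← MulChar.star_apply', ← MulChar.star_apply']; rfl
    rw [this, e1]
    simp only [map_add, map_mul, map_neg, conj_I, map_intCast, map_ofNat]
    ring
  refine ⟨1 - 2 * n, -m, by omega, ?_, e1, e2⟩
  have hr : ringChar ℂ ≠ ringChar (ZMod p) := by
    rw [ringChar.eq_zero, ZMod.ringChar_zmod_n]
    omega
  have := jacobiSum_mul_jacobiSum_inv hr h1 h1 h2
  rw [e1, e2, ZMod.card] at this
  have h' : ((p : ℤ) : ℂ) = (((1 - 2 * n) ^ 2 + 4 * (-m) ^ 2 : ℤ) : ℂ) := by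
    push_cast at this ⊢
    linear_combination -this - 4 * m ^ 2 * I_sq
  exact_mod_cast h'

open Complex in
lemma gauss_facts (p : ℕ) [Fact p.Prime] (hp8 : p % 8 = 5)
    (θ : ℕ) (hθ : IsPrimitiveRoot (θ : ZMod p) (p - 1))
    (χ : MulChar (ZMod p) ℂ) (hχ : χ (θ : ZMod p) = I) 
    (ψ : AddChar (ZMod p) ℂ) (hψ : ψ.IsPrimitive) :
    gaussSum χ ψ * gaussSum χ⁻¹ ψ = -p ∧ gaussSum (χ * χ) ψ ^ 2 = p ∧
    gaussSum χ ψ ^ 2 = jacobiSum χ χ * gaussSum (χ * χ) ψ ∧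
    gaussSum χ⁻¹ ψ ^ 2 = jacobiSum χ⁻¹ χ⁻¹ * gaussSum (χ * χ) ψ ∧
    jacobiSum χ (χ * χ) = - jacobiSum χ χ ∧ jacobiSum χ⁻¹ (χ * χ) = - jacobiSum χ⁻¹ χ⁻¹ := by
  obtain ⟨h4, h1, h1', h2⟩ := chi_facts p hp8 θ hθ χ hχ
  have hm := chi_neg_one p hp8 θ hθ χ hχ
  have c1 : χ * (χ * χ) = χ⁻¹ := by
    rw [eq_inv_iff_mul_eq_one, ← h4]; simp only [pow_succ, pow_zero, one_mul, mul_assoc]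
  have c2 : χ⁻¹ * (χ * χ) = χ := by simp
  have c3 : (χ * χ)⁻¹ = χ * χ := by
    rw [inv_eq_iff_mul_eq_one, ← h4]; simp only [pow_succ, pow_zero, one_mul, mul_assoc]
  have c4 : χ⁻¹ * χ⁻¹ = χ * χ := by rw [← c3, mul_inv]
  have hm' : χ⁻¹ (-1) = -1 := by
    rw [MulChar.inv_apply', inv_neg, inv_one, hm]
  have g13 : gaussSum χ ψ * gaussSum χ⁻¹ ψ = -p := by
    rw [← mul_gaussSum_inv_eq_gaussSum χ⁻¹ ψ, hm']
    have := gaussSum_mul_gaussSum_eq_card h1 hψ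
    rw [ZMod.card] at this
    linear_combination -this
  have g22 : gaussSum (χ * χ) ψ ^ 2 = p := by
    have := gaussSum_mul_gaussSum_eq_card h2 hψ
    have e := mul_gaussSum_inv_eq_gaussSum (χ * χ) ψ
    rw [ZMod.card, c3] at this
    rw [MulChar.mul_apply, hm] at e
    linear_combination this - gaussSum (χ * χ) ψ * e
  have k1 := jacobiSum_mul_nontrivial h2 ψ
  have k2 := jacobiSum_mul_nontrivial (c4 ▸ h2) (χ := χ⁻¹) (φ := χ⁻¹) ψ
  have k3 := jacobiSum_mul_nontrivial (c1 ▸ h1') (χ := χ) (φ := χ * χ) ψ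
  have k4 := jacobiSum_mul_nontrivial (c2.symm ▸ h1) (χ := χ⁻¹) (φ := χ * χ) ψ
  rw [c4] at k2
  rw [c1] at k3
  rw [c2] at k4
  have hp0 : (p : ℂ) ≠ 0 := by
    have := (Fact.out : p.Prime).ne_zero
    exact_mod_cast this
  have hg : gaussSum (χ * χ) ψ ≠ 0 := by
    intro h; rw [h] at g22; apply hp0; rw [← g22]; ring
  refine ⟨g13, g22, by linear_combination -k1, by linear_combination -k2, ?_, ?_⟩
  · apply mul_left_cancel₀ (mul_ne_zero hp0 hg)
    linear_combination (-gaussSum (χ * χ) ψ * gaussSum χ ψ) * k3 +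
      gaussSum (χ * χ) ψ * jacobiSum χ (χ * χ) * g13 - gaussSum χ ψ ^ 2 * g22 + p * k1
  · apply mul_left_cancel₀ (mul_ne_zero hp0 hg)
    linear_combination (-gaussSum (χ * χ) ψ * gaussSum χ⁻¹ ψ) * k4 +
      gaussSum (χ * χ) ψ * jacobiSum χ⁻¹ (χ * χ) * g13 - gaussSum χ⁻¹ ψ ^ 2 * g22 + p * k2
open Complex in
lemma ind_eq (p : ℕ) [Fact p.Prime] (hp8 : p % 8 = 5)
    (θ : ℕ) (hθ : IsPrimitiveRoot (θ : ZMod p) (p - 1))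
    (χ : MulChar (ZMod p) ℂ) (hχ : χ (θ : ZMod p) = I) (a : ZMod p) :
    ((1 : MulChar (ZMod p) ℂ) a = (if χ a = I ^ 0 then 1 else 0) + (if χ a = I ^ 1 then 1 else 0)
        + (if χ a = I ^ 2 then 1 else 0) + (if χ a = I ^ 3 then 1 else 0)) ∧
    (χ a = (if χ a = I ^ 0 then 1 else 0) + I * (if χ a = I ^ 1 then 1 else 0)
        - (if χ a = I ^ 2 then 1 else 0) - I * (if χ a = I ^ 3 then 1 else 0)) ∧
    ((χ * χ) a = (if χ a = I ^ 0 then 1 else 0) - (if χ a = I ^ 1 then 1 else 0)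
        + (if χ a = I ^ 2 then 1 else 0) - (if χ a = I ^ 3 then 1 else 0)) ∧
    (χ⁻¹ a = (if χ a = I ^ 0 then 1 else 0) - I * (if χ a = I ^ 1 then 1 else 0)
        - (if χ a = I ^ 2 then 1 else 0) + I * (if χ a = I ^ 3 then 1 else 0)) := by
  rw [← MulChar.star_apply', MulChar.mul_apply]
  have n1 : (I : ℂ) ≠ 1 := fun h => absurd (congrArg Complex.re h) (by simp)
  have n2 : (I : ℂ) ≠ -1 := fun h => absurd (congrArg Complex.re h) (by simp)
  have n3 : (I : ℂ) ≠ -I := fun h => absurd (congrArg Complex.im h) (by norm_num)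
  have n4 : (1 : ℂ) ≠ -I := fun h => absurd (congrArg Complex.re h) (by simp)
  have n5 : (-1 : ℂ) ≠ -I := fun h => absurd (congrArg Complex.re h) (by simp)
  have n6 : (1 : ℂ) ≠ -1 := by norm_num
  simp only [pow_zero, pow_one, I_sq, I_pow_three]
  by_cases ha : a = 0
  · subst ha
    simp only [MulChar.map_zero]
    simp [I_ne_zero.symm]
  · have hu : IsUnit a := isUnit_iff_ne_zero.mpr ha
    rw [MulChar.one_apply hu]
    rcases chi_vals p hp8 θ hθ χ hχ a ha with h | h | h | h <;> rw [h] <;>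
      simp [n1, n2, n3, n4, n5, n6, n1.symm, n2.symm, n3.symm, n4.symm, n5.symm, n6.symm]

open Complex in
lemma card_formula (p : ℕ) [Fact p.Prime] (hp8 : p % 8 = 5)
    (θ : ℕ) (hθ : IsPrimitiveRoot (θ : ZMod p) (p - 1))
    (χ : MulChar (ZMod p) ℂ) (hχ : χ (θ : ZMod p) = I) :
    16 * (((cycD p θ 0).filter (fun a => (a + 1) % p ∈ cycD p θ 1)).card : ℂ)
      = p + 1 + 2 * I * jacobiSum χ χ - 2 * I * jacobiSum χ⁻¹ χ⁻¹ - jacobiSum χ χ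
        - jacobiSum χ⁻¹ χ⁻¹ := by
  classical
  obtain ⟨h4, h1, h1', h2⟩ := chi_facts p hp8 θ hθ χ hχ
  have hm := chi_neg_one p hp8 θ hθ χ hχ
  obtain ⟨-, -, -, -, q1, q2⟩ := gauss_facts p hp8 θ hθ χ hχ _ (ZMod.isPrimitive_stdAddChar p)
  have : Fact (1 < p) := ⟨by omega⟩
  have hm' : χ⁻¹ (-1) = -1 := by
    rw [MulChar.inv_apply', inv_neg, inv_one, hm]
  have c3 : (χ * χ)⁻¹ = χ * χ := by
    rw [inv_eq_iff_mul_eq_one, ← h4]; simp only [pow_succ, pow_zero, one_mul, mul_assoc]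
  rw [Finset.card_filter]
  push_cast
  rw [sum_cyc p hp8 θ hθ χ hχ 0 (by norm_num)
    (fun t => if (t + 1) % p ∈ cycD p θ 1 then 1 else 0)]
  have e : ∀ a : ZMod p, ((a.val + 1) % p ∈ cycD p θ 1) ↔ χ (a + 1) = I ^ 1 := by
    intro a
    rw [← mem_cyc p hp8 θ hθ χ hχ 1 (by norm_num), ZMod.val_add, ZMod.val_one]
  simp only [e]
  rw [← Equiv.sum_comp (Equiv.neg (ZMod p)), Finset.mul_sum]
  have key : ∀ a : ZMod p, 16 * (if χ (Equiv.neg (ZMod p) a) = I ^ 0 then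
      (if χ (Equiv.neg (ZMod p) a + 1) = I ^ 1 then (1 : ℂ) else 0) else 0)
      = ((1 : MulChar (ZMod p) ℂ) a - χ a + (χ * χ) a - χ⁻¹ a) *
        ((1 : MulChar (ZMod p) ℂ) (1 - a) - I * χ (1 - a) - (χ * χ) (1 - a) + I * χ⁻¹ (1 - a)) := by
    intro a
    have hb : Equiv.neg (ZMod p) a + 1 = 1 - a := by simp; ring
    have ha : Equiv.neg (ZMod p) a = -1 * a := by simp
    rw [hb, ha]
    obtain ⟨u0, u1, u2, u3⟩ := ind_eq p hp8 θ hθ χ hχ (-1 * a)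
    obtain ⟨v0, v1, v2, v3⟩ := ind_eq p hp8 θ hθ χ hχ (1 - a)
    have f1 : 4 * (if χ (-1 * a) = I ^ 0 then (1 : ℂ) else 0)
        = (1 : MulChar (ZMod p) ℂ) a - χ a + (χ * χ) a - χ⁻¹ a := by
      have w0 : (1 : MulChar (ZMod p) ℂ) (-1 * a) = (1 : MulChar (ZMod p) ℂ) a := by
        rw [map_mul, MulChar.one_apply (by simp), one_mul]
      have w1 : χ (-1 * a) = - χ a := by rw [map_mul, hm]; ring
      have w2 : (χ * χ) (-1 * a) = (χ * χ) a := by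
        rw [map_mul, MulChar.mul_apply, hm]; ring
      have w3 : χ⁻¹ (-1 * a) = - χ⁻¹ a := by rw [map_mul, hm']; ring
      linear_combination w0 + w1 + w2 + w3 - u0 - u1 - u2 - u3
    have f2 : 4 * (if χ (1 - a) = I ^ 1 then (1 : ℂ) else 0) =
        ((1 : MulChar (ZMod p) ℂ) (1 - a) - I * χ (1 - a) - (χ * χ) (1 - a) + I * χ⁻¹ (1 - a)) := by
      generalize (if χ (1 - a) = I ^ 0 then (1 : ℂ) else 0) = d0 at *
      generalize (if χ (1 - a) = I ^ 1 then (1 : ℂ) else 0) = d1 at *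
      generalize (if χ (1 - a) = I ^ 2 then (1 : ℂ) else 0) = d2 at *
      generalize (if χ (1 - a) = I ^ 3 then (1 : ℂ) else 0) = d3 at *
      linear_combination -v0 + I * v1 + v2 - I * v3 + (2 * d1 - 2 * d3) * I_sq
    rw [← f1, ← f2]
    split_ifs <;> norm_num
  rw [Finset.sum_congr rfl fun a _ => key a]
  have expand : ∑ a : ZMod p, ((1 : MulChar (ZMod p) ℂ) a - χ a + (χ * χ) a - χ⁻¹ a) *
        ((1 : MulChar (ZMod p) ℂ) (1 - a) - I * χ (1 - a) - (χ * χ) (1 - a) + I * χ⁻¹ (1 - a))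
      = jacobiSum (1 : MulChar (ZMod p) ℂ) 1 - I * jacobiSum 1 χ - jacobiSum 1 (χ * χ)
        + I * jacobiSum 1 χ⁻¹
        - jacobiSum χ 1 + I * jacobiSum χ χ + jacobiSum χ (χ * χ) - I * jacobiSum χ χ⁻¹
        + jacobiSum (χ * χ) 1 - I * jacobiSum (χ * χ) χ - jacobiSum (χ * χ) (χ * χ)
        + I * jacobiSum (χ * χ) χ⁻¹
        - jacobiSum χ⁻¹ 1 + I * jacobiSum χ⁻¹ χ + jacobiSum χ⁻¹ (χ * χ)
        - I * jacobiSum χ⁻¹ χ⁻¹ := by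
    simp only [jacobiSum, Finset.mul_sum, ← Finset.sum_add_distrib, ← Finset.sum_sub_distrib]
    refine Finset.sum_congr rfl fun a _ => ?_
    ring
  have t22 : jacobiSum (χ * χ) (χ * χ) = -1 := by
    have := jacobiSum_nontrivial_inv h2
    rw [c3, MulChar.mul_apply, hm] at this
    rw [this]; norm_num
  rw [expand, jacobiSum_comm χ 1, jacobiSum_comm (χ * χ) 1, jacobiSum_comm χ⁻¹ 1,
    jacobiSum_comm χ⁻¹ χ, jacobiSum_comm (χ * χ) χ, jacobiSum_comm (χ * χ) χ⁻¹, q1, q2, t22,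
    jacobiSum_one_one, jacobiSum_one_nontrivial h1, jacobiSum_one_nontrivial h1',
    jacobiSum_one_nontrivial h2, jacobiSum_nontrivial_inv h1, hm, ZMod.card]
  ring

open Complex in
lemma complex_identity (p : ℕ) [Fact p.Prime] (hp8 : p % 8 = 5)
    (x y : ℤ) (hxy : (p : ℤ) = x ^ 2 + 4 * y ^ 2)
    (θ : ℕ) (hθ : IsPrimitiveRoot (θ : ZMod p) (p - 1))
    (hy : 16 * (((cycD p θ 0).filter (fun a => (a + 1) % p ∈ cycD p θ 1)).card : ℤ)
        = (p : ℤ) + 1 + 2 * x - 8 * y)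
    (ζ : ℂ) (hζ : IsPrimitiveRoot ζ p) (η : ℕ → ℂ)
    (hη : ∀ i, η i = ∑ t ∈ cycD p θ i, ζ ^ t) :
    4 * (η 2 + 2 * η 3 + 3 * η 0) * (η 0 + 2 * η 1 + 3 * η 2)
      = -2 * (3 - 4 * y) * (η 0 + η 2 - η 1 - η 3) + 5 * p + 9 := by
  obtain ⟨χ, hχ⟩ := exists_chi p hp8 θ hθ
  have hp : p.Prime := Fact.out
  have := card_formula p hp8 θ hθ χ hχ
  obtain ⟨s, t, hs, hst, hJ, hJ'⟩ := J_form p hp8 θ hθ χ hχ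
  have hyt : y = t := by
    apply rep_unique p x y s t (Nat.prime_iff_prime_int.mp hp) (by exact_mod_cast hp.pos) hxy hst hs
    have hyC := congrArg (Int.cast : ℤ → ℂ) hy
    push_cast at hyC
    rw [this, hJ, hJ'] at hyC
    have h3 : ((2 * (x - 4 * y) : ℤ) : ℂ) = ((2 * (s - 4 * t) : ℤ) : ℂ) := by
      push_cast
      linear_combination -hyC + 8 * t * I_sq
    have h4 : 2 * (x - 4 * y) = 2 * (s - 4 * t) := by exact_mod_cast h3
    omega
  subst hyt
  have hz := hζ.pow_eq_one
  have hprim : (AddChar.zmodChar p hz).IsPrimitive := AddChar.zmodChar_primitive_of_primitive_root p hζ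
  set ψ := AddChar.zmodChar p hz with hψ
  obtain ⟨g13, g22, g11, g33, -, -⟩ := gauss_facts p hp8 θ hθ χ hχ ψ hprim
  have g0 : gaussSum (1 : MulChar (ZMod p) ℂ) ψ = -1 := by
    apply gaussSum_one_left
    intro h
    have := hprim (a := 1) one_ne_zero
    rw [AddChar.mulShift_one] at this
    exact this h
  have hη' : ∀ i, i < 4 → η i = ∑ a : ZMod p, (if χ a = I ^ i then 1 else 0) * ψ a := by
    intro i hi
    rw [hη, sum_cyc p hp8 θ hθ χ hχ i hi]
    refine Finset.sum_congr rfl fun a _ => ?_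
    rw [hψ, AddChar.zmodChar_apply]
    split_ifs <;> simp
  have e0 : gaussSum (1 : MulChar (ZMod p) ℂ) ψ = η 0 + η 1 + η 2 + η 3 := by
    simp only [hη' 0 (by norm_num), hη' 1 (by norm_num), hη' 2 (by norm_num), hη' 3 (by norm_num),
      gaussSum, Finset.mul_sum, ← Finset.sum_add_distrib, ← Finset.sum_sub_distrib]
    refine Finset.sum_congr rfl fun a _ => ?_
    linear_combination ψ a * (ind_eq p hp8 θ hθ χ hχ a).1
  have e1 : gaussSum χ ψ = η 0 + I * η 1 - η 2 - I * η 3 := by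
    simp only [hη' 0 (by norm_num), hη' 1 (by norm_num), hη' 2 (by norm_num), hη' 3 (by norm_num),
      gaussSum, Finset.mul_sum, ← Finset.sum_add_distrib, ← Finset.sum_sub_distrib]
    refine Finset.sum_congr rfl fun a _ => ?_
    linear_combination ψ a * (ind_eq p hp8 θ hθ χ hχ a).2.1
  have e2 : gaussSum (χ * χ) ψ = η 0 - η 1 + η 2 - η 3 := by
    simp only [hη' 0 (by norm_num), hη' 1 (by norm_num), hη' 2 (by norm_num), hη' 3 (by norm_num),
      gaussSum, Finset.mul_sum, ← Finset.sum_add_distrib, ← Finset.sum_sub_distrib]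
    refine Finset.sum_congr rfl fun a _ => ?_
    linear_combination ψ a * (ind_eq p hp8 θ hθ χ hχ a).2.2.1
  have e3 : gaussSum χ⁻¹ ψ = η 0 - I * η 1 - η 2 + I * η 3 := by
    simp only [hη' 0 (by norm_num), hη' 1 (by norm_num), hη' 2 (by norm_num), hη' 3 (by norm_num),
      gaussSum, Finset.mul_sum, ← Finset.sum_add_distrib, ← Finset.sum_sub_distrib]
    refine Finset.sum_congr rfl fun a _ => ?_
    linear_combination ψ a * (ind_eq p hp8 θ hθ χ hχ a).2.2.2
  rw [e1, e3] at g13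
  rw [e2] at g22
  rw [e1, e2, hJ] at g11
  rw [e3, e2, hJ'] at g33
  rw [e0] at g0
  have hab : (η 0 - η 2) ^ 2 + (η 1 - η 3) ^ 2 = -p := by
    linear_combination g13 + (η 1 - η 3) ^ 2 * I_sq
  have h2ab : (η 0 - η 2) * (η 1 - η 3) = y * (η 0 - η 1 + η 2 - η 3) := by
    have h4 : (4 * I) * ((η 0 - η 2) * (η 1 - η 3)) = (4 * I) * (y * (η 0 - η 1 + η 2 - η 3)) := by
      linear_combination g11 - g33
    exact mul_left_cancel₀ (by simp) h4
  have hsum : 2 * (2 * (η 0 + η 2) + (η 1 + η 3)) = (η 0 - η 1 + η 2 - η 3) - 3 := by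
    linear_combination 3 * g0
  generalize η 0 = A at *
  generalize η 1 = B at *
  generalize η 2 = C at *
  generalize η 3 = D at *
  linear_combination -4 * hab + 8 * h2ab + g22 + (2 * (2 * (A + C) + (B + D)) + ((A - B + C - D) - 3)) * hsum

theorem lemma5_part4
    (p : ℕ) (hp : p.Prime) (hp8 : p % 8 = 5)
    (x y : ℤ) (hx : x % 4 = 1) (hxy : (p : ℤ) = x ^ 2 + 4 * y ^ 2)
    (θ : ℕ) (hθ : IsPrimitiveRoot (θ : ZMod p) (p - 1))
    (hy : 16 * (((cycD p θ 0).filter (fun a => (a + 1) % p ∈ cycD p θ 1)).card : ℤ)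
        = (p : ℤ) + 1 + 2 * x - 8 * y)
    :
    4 * (eta4 p θ 2 + 2 * eta4 p θ 3 + 3 * eta4 p θ 0) * (eta4 p θ 0 + 2 * eta4 p θ 1 + 3 * eta4 p θ 2)
      ≡ -2 * (3 - 4 * y) * Hval p θ + 5 * (p : ℤ) + 9 [ZMOD ((4 : ℤ) ^ p - 1) / 3] := by
  haveI : Fact p.Prime := ⟨hp⟩
  have hζ := Complex.isPrimitiveRoot_exp p hp.ne_zero
  set ζ := Complex.exp (2 * Real.pi * Complex.I / p)
  have hid := complex_identity p hp8 x y hxy θ hθ hy ζ hζ (fun i => ∑ t ∈ cycD p θ i, ζ ^ t)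
    (fun _ => rfl)
  let E : ℕ → Polynomial ℤ := fun i => ∑ t ∈ cycD p θ i, Polynomial.X ^ t
  let Q : Polynomial ℤ := (-2 * (3 - 4 * Polynomial.C y) * (E 0 + E 2 - E 1 - E 3) +
    5 * Polynomial.C (p : ℤ) + 9) - 4 * (E 2 + 2 * E 3 + 3 * E 0) * (E 0 + 2 * E 1 + 3 * E 2)
  have hQ : Polynomial.aeval ζ Q = 0 := by
    simp only [Q, E, map_sub, map_add, map_mul, map_sum, map_pow, Polynomial.aeval_X, map_neg,
      map_ofNat, Polynomial.aeval_C]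
    simp only [algebraMap_int_eq, eq_intCast, Int.cast_natCast]
    linear_combination -hid
  have hdvd : Polynomial.cyclotomic p ℤ ∣ Q := by
    rw [Polynomial.cyclotomic_eq_minpoly hζ hp.pos]
    exact minpoly.isIntegrallyClosed_dvd (hζ.isIntegral hp.pos) hQ
  have h4 := Polynomial.eval_dvd (x := (4 : ℤ)) hdvd
  have hM : ((4 : ℤ) ^ p - 1) / 3 = (Polynomial.cyclotomic p ℤ).eval 4 := by
    have := congrArg (Polynomial.eval (4 : ℤ)) (Polynomial.cyclotomic_prime_mul_X_sub_one ℤ p)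
    simp only [Polynomial.eval_mul, Polynomial.eval_sub, Polynomial.eval_X, Polynomial.eval_one,
      Polynomial.eval_pow] at this
    omega
  rw [hM, Int.modEq_iff_dvd]
  have hE : ∀ i, (E i).eval 4 = eta4 p θ i := by
    intro i
    simp [E, eta4, Polynomial.eval_finsetSum]
  have hv : Q.eval 4 = -2 * (3 - 4 * y) * Hval p θ + 5 * (p : ℤ) + 9 -
      4 * (eta4 p θ 2 + 2 * eta4 p θ 3 + 3 * eta4 p θ 0) *
        (eta4 p θ 0 + 2 * eta4 p θ 1 + 3 * eta4 p θ 2) := by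
    simp only [Q, Hval, Polynomial.eval_sub, Polynomial.eval_add, Polynomial.eval_mul,
      Polynomial.eval_neg, Polynomial.eval_ofNat, Polynomial.eval_C, hE]
  rw [← hv]
  exact h4
end
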